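/- arXiv:1411.3173 — 2 statements merged into one kernel-verified Lean document; each statement's English description precedes it below -/
import Mathlib

section
/- Let X = [0,1] × ∏_{t∈(0,1]} X_t where X_t = ℕ with the discrete topology for every t ∈ (0,1], for i ∈ {1,2} let F_i = {y = (y_t)_{t∈(0,1]} ∈ ℕ^{(0,1]} : for every n ∈ ℕ with n ≠ i, the set {t ∈ (0,1] : y_t = n} has at most one element}, and let A ⊆ [0,1] be nonempty. Then for every 0 ≤ α < ω₁ and each i ∈ {1,2} the set A × F_i is α-embedded in X. -/
/-!
The positive classes reduce to class `0`: if every zero set of a subspace `A` of `Z` is the trace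
of a zero set of `Z`, then traces commute with complements, countable unions and countable
intersections, so the same holds for every functionally additive and multiplicative class
(`funClass_extend`).

For class `0`, the point is that a continuous real function on `A × F i` depends on countably many
coordinates. The only property of `F i` that is used is that it is stable under the truncations
`trunc i S`, which keep the coordinates in `S` and put `i` on the others.

For a continuous `g` on a truncation-stable set `F` (`exists_countable_trunc`), a closing-off
argument gives a countable `S` such that, for each finite `R ⊆ S`, each `v : R → N` and each `U` in
a countable base of `ℝ`, the following holds: if the basic open subsets of `F` on which `g ∈ U` and
whose conditions extend `v` cannot be found with new coordinates off every finite set, then some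
finite subset of `S` already witnesses this. If `g y ≠ g (trunc i S y)`, separate the values by
`U` and `V` and choose a finite `E` such that agreeing on `E` with `y` (with `trunc i S y`) forces
`g ∈ U` (`g ∈ V`). With `R = E ∩ S`, the point `x = trunc i R y` agrees with `trunc i S y` on `E`,
so `g x ∈ V`; but the choice of `S` puts `x` in the closure of `g⁻¹ U`, which is absurd.

A countable dense subset of `A` takes care of the first factor. The function on `A × F i` then
factors through the metrizable space `[0,1] × ℕ^S`, in which closed sets are zero sets.
-/

open Set Topology

/-- A topological space is pseudo-ℵ₁-compact if every locally finite family of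
(pairwise distinct) nonempty open subsets is at most countable. -/
def PseudoAleph1Compact (Z : Type*) [TopologicalSpace Z] : Prop :=
  ∀ 𝒰 : Set (Set Z), (∀ U ∈ 𝒰, IsOpen U) → (∀ U ∈ 𝒰, U.Nonempty) →
    LocallyFinite (fun U : 𝒰 => (U : Set Z)) → 𝒰.Countable

/-- `A` is functionally closed in `Z` if it is the zero set of a continuous real function. -/
def FunctionallyClosed {Z : Type*} [TopologicalSpace Z] (A : Set Z) : Prop :=
  ∃ f : Z → ℝ, Continuous f ∧ A = f ⁻¹' {0}

/-- `A` is functionally open in `Z` if its complement is functionally closed. -/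
def FunctionallyOpen {Z : Type*} [TopologicalSpace Z] (A : Set Z) : Prop :=
  FunctionallyClosed Aᶜ

/-- `FunClass Z true α A` : `A` is of the functionally additive class `α` in `Z`;
`FunClass Z false α A` : `A` is of the functionally multiplicative class `α` in `Z`. -/
inductive FunClass (Z : Type*) [TopologicalSpace Z] : Bool → Ordinal.{0} → Set Z → Prop
  | open_ (A : Set Z) (h : FunctionallyOpen A) : FunClass Z true 0 A
  | closed_ (A : Set Z) (h : FunctionallyClosed A) : FunClass Z false 0 A
  | union (α : Ordinal.{0}) (A : ℕ → Set Z) (β : ℕ → Ordinal.{0}) (hα : α ≠ 0)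
      (hβ : ∀ n, β n < α) (h : ∀ n, FunClass Z false (β n) (A n)) :
      FunClass Z true α (⋃ n, A n)
  | inter (α : Ordinal.{0}) (A : ℕ → Set Z) (β : ℕ → Ordinal.{0}) (hα : α ≠ 0)
      (hβ : ∀ n, β n < α) (h : ∀ n, FunClass Z true (β n) (A n)) :
      FunClass Z false α (⋂ n, A n)

/-- `A` is α-embedded in `Z` if every subset of `A` of functionally multiplicative class `α`
in the subspace `A` is the trace on `A` of a set of functionally multiplicative class `α` in `Z`. -/
def IsAlphaEmbedded {Z : Type*} [TopologicalSpace Z] (α : Ordinal.{0}) (A : Set Z) : Prop :=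
  ∀ B : Set Z, B ⊆ A → FunClass ↥A false α (Subtype.val ⁻¹' B) →
    ∃ C : Set Z, FunClass Z false α C ∧ C ∩ A = B

/-- `Z` is α-universal if every subset of `Z` is α-embedded in `Z`. -/
def AlphaUniversal (Z : Type*) [TopologicalSpace Z] (α : Ordinal.{0}) : Prop :=
  ∀ A : Set Z, IsAlphaEmbedded α A

/-- The projection of the product `∀ t, X t` onto the coordinates in `S`. -/
def proj {T : Type*} {X : T → Type*} (S : Set T) (x : ∀ t, X t) : ∀ t : S, X t.1 :=
  fun t => x t.1

/-- A functionally measurable (Baire) set: a member of some functionally additive or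
multiplicative class `α` with `α < ω₁`. -/
def FunctionallyMeasurable {Z : Type*} [TopologicalSpace Z] (A : Set Z) : Prop :=
  ∃ (b : Bool) (β : Ordinal.{0}), β < (Cardinal.aleph 1).ord ∧ FunClass Z b β A

/-- `Y` has a regular `Gδ`-diagonal. -/
def RegularGDeltaDiagonal (Y : Type*) [TopologicalSpace Y] : Prop :=
  ∃ G : ℕ → Set (Y × Y), (∀ n, IsOpen (G n)) ∧
    {p : Y × Y | p.1 = p.2} = ⋂ n, G n ∧
    {p : Y × Y | p.1 = p.2} = ⋂ n, closure (G n)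

/-- The natural numbers `{1, 2, 3, ...}` with the discrete topology
(as a subspace of the discrete space `ℕ`). -/
abbrev PosNat : Type := {n : ℕ // 0 < n}

/-- The product `Y = ℕ^{(0,1]}` where `ℕ = {1,2,...}` is discrete. -/
abbrev Yprod : Type := ↥(Set.Ioc (0 : ℝ) 1) → PosNat

/-- Stone's set `F i = {y ∈ Y : |{t : y t = n}| ≤ 1 for every n ≠ i}`. -/
def Fset (i : PosNat) : Set Yprod :=
  {y | ∀ n : PosNat, n ≠ i → {t : ↥(Set.Ioc (0 : ℝ) 1) | y t = n}.Subsingleton}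

/-- The product `X = [0,1] × ℕ^{(0,1]}`. -/
abbrev Xprod : Type := ↥(Set.Icc (0 : ℝ) 1) × Yprod

/-- Keep the coordinates of `y` in `S` and put `i` on all the others. -/
noncomputable def trunc {T N : Type*} (i : N) (S : Set T) (y : T → N) : T → N :=
  open Classical in fun t => if t ∈ S then y t else i

lemma trunc_of_mem {T N : Type*} {i : N} {S : Set T} {y : T → N} {t : T} (h : t ∈ S) :
    trunc i S y t = y t := by simp [trunc, h]

lemma trunc_of_notMem {T N : Type*} {i : N} {S : Set T} {y : T → N} {t : T} (h : t ∉ S) :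
    trunc i S y t = i := by simp [trunc, h]

lemma continuous_trunc {T N : Type*} [TopologicalSpace N] (i : N) (S : Set T) :
    Continuous (trunc i S : (T → N) → T → N) := by
  refine continuous_pi fun t => ?_
  by_cases h : t ∈ S
  · simpa [trunc, h] using continuous_apply t
  · simpa [trunc, h] using continuous_const

lemma trunc_trunc {T N : Type*} (i : N) {S S' : Set T} (h : S ⊆ S') (y : T → N) :
    trunc i S (trunc i S' y) = trunc i S y := by
  funext t
  by_cases ht : t ∈ S
  · rw [trunc_of_mem ht, trunc_of_mem ht, trunc_of_mem (h ht)]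
  · rw [trunc_of_notMem ht, trunc_of_notMem ht]

/-! ### Functions depending on countably many coordinates -/

lemma exists_countable_closed {T : Type*} (D : Finset T → Set T) (hD : ∀ R, (D R).Countable) :
    ∃ S : Set T, S.Countable ∧ ∀ R : Finset T, (R : Set T) ⊆ S → D R ⊆ S := by
  let step : Set T → Set T := fun S => S ∪ ⋃ R ∈ {R : Finset T | (R : Set T) ⊆ S}, D R
  let s : ℕ → Set T := fun n => step^[n] ∅
  have hs : ∀ n, s (n + 1) = step (s n) := fun n => Function.iterate_succ_apply' step n ∅
  have hmono : Monotone s := monotone_nat_of_le_succ fun n => by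
    rw [hs]; exact Set.subset_union_left
  refine ⟨⋃ n, s n, Set.countable_iUnion fun n => ?_, fun R hR => ?_⟩
  · induction n with
    | zero => exact Set.countable_empty
    | succ n ih =>
      rw [hs]
      refine ih.union (Set.Countable.biUnion ?_ fun R _ => hD R)
      have h := Set.countable_ofPred_finite_subset ih
      refine Set.MapsTo.countable_of_injOn (f := fun R : Finset T => (R : Set T)) ?_
        Finset.coe_injective.injOn h
      intro R hR
      exact ⟨R.finite_toSet, hR⟩
  · obtain ⟨n, hn⟩ := hmono.directed_le.exists_mem_subset_of_finset_subset_biUnion hR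
    refine Set.Subset.trans ?_ (Set.subset_iUnion s (n + 1))
    rw [hs]
    exact (Set.subset_biUnion_of_mem (u := D) (show R ∈ {R : Finset T | (R : Set T) ⊆ s n} from hn)).trans
      Set.subset_union_right

lemma exists_finset_nhd {T N : Type*} [TopologicalSpace N] [DiscreteTopology N]
    {F : Set (T → N)} {O : Set F} (hO : IsOpen O) {y : F} (hy : y ∈ O) :
    ∃ E : Finset T, ∀ z : F, (∀ t ∈ E, z.1 t = y.1 t) → z ∈ O := by
  obtain ⟨O', hO', rfl⟩ := isOpen_induced_iff.1 hO
  obtain ⟨E, u, hu, hE⟩ := isOpen_pi_iff.1 hO' y.1 hy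
  refine ⟨E, fun z hz => hE ?_⟩
  intro t ht
  rw [hz t ht]
  exact (hu t ht).2

/-- A continuous real function on a truncation-stable subset of a product of countable discrete
spaces depends on countably many coordinates. -/
lemma exists_countable_trunc {T N : Type*} [TopologicalSpace N] [DiscreteTopology N] [Countable N]
    (i : N) {F : Set (T → N)} (hF : ∀ S, ∀ y ∈ F, trunc i S y ∈ F) (g : F → ℝ)
    (hg : Continuous g) :
    ∃ S : Set T, S.Countable ∧
      ∀ S', S ⊆ S' → ∀ y : F, g y = g ⟨trunc i S' y.1, hF S' _ y.2⟩ := by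
  classical
  let basis := TopologicalSpace.countableBasis ℝ
  have hbc : Countable basis := (TopologicalSpace.countable_countableBasis ℝ).to_subtype
  -- `Q R v U C`: some condition `y|E` extending `v` forces `g ∈ U` and meets `C` only inside `R`.
  let Q : (R : Finset T) → (R → N) → Set ℝ → Finset T → Prop := fun R v U C =>
    ∃ (y : F) (E : Finset T), R ⊆ E ∧ (∀ t ∈ E, t ∈ C → t ∈ R) ∧ (∀ t : R, y.1 t = v t) ∧
      ∀ z : F, (∀ t ∈ E, z.1 t = y.1 t) → g z ∈ U
  -- `C R v U` is a finite set at which `Q R v U` fails, if it fails anywhere.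
  have hC : ∀ (R : Finset T) (v : R → N) (U : Set ℝ), ∃ C : Finset T,
      Q R v U C → ∀ C', Q R v U C' := by
    intro R v U
    by_cases h : ∀ C', Q R v U C'
    · exact ⟨∅, fun _ => h⟩
    · push Not at h
      obtain ⟨C, hC⟩ := h
      exact ⟨C, fun h => absurd h hC⟩
  choose C hC using hC
  obtain ⟨S₀, hS₀c, hS₀⟩ := exists_countable_closed
    (fun R => ⋃ (v : R → N) (U : basis), (C R v U : Set T))
    (fun R => Set.countable_iUnion fun v => Set.countable_iUnion fun U =>
      (C R v U).finite_toSet.countable)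
  have key : ∀ y : F, g y = g ⟨trunc i S₀ y.1, hF S₀ _ y.2⟩ := by
    intro y
    by_contra hne
    obtain ⟨U', V, hU', hV, hyU', hyV, hdisj⟩ := t2_separation hne
    obtain ⟨U, hUb, hyU, hUU'⟩ :=
      (TopologicalSpace.isBasis_countableBasis ℝ).exists_subset_of_mem_open hyU' hU'
    have hU := TopologicalSpace.isOpen_of_mem_countableBasis hUb
    obtain ⟨E₁, hE₁⟩ := exists_finset_nhd (hU.preimage hg) (y := y) hyU
    obtain ⟨E₂, hE₂⟩ := exists_finset_nhd (hV.preimage hg)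
      (y := ⟨trunc i S₀ y.1, hF S₀ _ y.2⟩) hyV
    let E := E₁ ∪ E₂
    let R := E.filter (· ∈ S₀)
    have hRS : (R : Set T) ⊆ S₀ := fun t ht => (Finset.mem_filter.1 ht).2
    let v : R → N := fun t => y.1 t
    let x : F := ⟨trunc i R y.1, hF R _ y.2⟩
    have hxV : g x ∈ V := by
      refine hE₂ x fun t ht => ?_
      have htE : t ∈ E := Finset.mem_union_right _ ht
      by_cases hts : t ∈ S₀
      · have : t ∈ (R : Set T) := Finset.mem_filter.2 ⟨htE, hts⟩
        change trunc i R y.1 t = trunc i S₀ y.1 t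
        rw [trunc_of_mem this, trunc_of_mem hts]
      · have : t ∉ (R : Set T) := fun h => hts (hRS h)
        change trunc i R y.1 t = trunc i S₀ y.1 t
        rw [trunc_of_notMem this, trunc_of_notMem hts]
    have hCS : (C R v U : Set T) ⊆ S₀ := by
      refine Set.Subset.trans ?_ (hS₀ R hRS)
      exact Set.subset_iUnion_of_subset v (Set.subset_iUnion_of_subset (⟨U, hUb⟩ : basis) le_rfl)
    have hQ : ∀ C', Q R v U C' := by
      refine hC R v U ⟨y, E, Finset.filter_subset _ _, fun t ht htC => ?_, fun _ => rfl, fun z hz => ?_⟩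
      · exact Finset.mem_filter.2 ⟨ht, hCS htC⟩
      · exact hE₁ z fun t ht => hz t (Finset.mem_union_left _ ht)
    obtain ⟨C', hC'⟩ := exists_finset_nhd (hV.preimage hg) (y := x) hxV
    obtain ⟨y', E', hRE, hEC, hv, hE'⟩ := hQ C'
    let z : F := ⟨trunc i E' y'.1, hF E' _ y'.2⟩
    have hzU : g z ∈ U := hE' z fun t ht => trunc_of_mem (Finset.mem_coe.2 ht)
    -- The new condition meets the finite set around `x` only inside `R`, and both `z` and `x`
    -- equal `i` off their supporting conditions, so `z` agrees with `x` on that finite set.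
    have hzV : g z ∈ V := by
      refine hC' z fun t ht => ?_
      change trunc i E' y'.1 t = trunc i R y.1 t
      by_cases htE : t ∈ E'
      · have htR := hEC t htE ht
        rw [trunc_of_mem (Finset.mem_coe.2 htE), trunc_of_mem (Finset.mem_coe.2 htR)]
        exact hv ⟨t, htR⟩
      · rw [trunc_of_notMem (by simpa using htE),
          trunc_of_notMem (fun h => htE (hRE (Finset.mem_coe.1 h)))]
    exact Set.disjoint_left.1 hdisj (hUU' hzU) hzV
  refine ⟨S₀, hS₀c, fun S' hS' y => ?_⟩
  rw [key y, key ⟨trunc i S' y.1, hF S' _ y.2⟩]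
  congr 2
  exact (trunc_trunc i hS' y.1).symm

/-! ### Extension of functionally closed sets and of the higher classes -/

lemma functionallyClosed_preimage {Z M : Type*} [TopologicalSpace Z] [TopologicalSpace M]
    [TopologicalSpace.MetrizableSpace M] {φ : Z → M} (hφ : Continuous φ) {K : Set M}
    (hK : IsClosed K) : FunctionallyClosed (φ ⁻¹' K) := by
  let _ := TopologicalSpace.metrizableSpaceMetric M
  rcases K.eq_empty_or_nonempty with rfl | hne
  · exact ⟨fun _ => 1, continuous_const, by ext; simp⟩
  · refine ⟨fun z => Metric.infDist (φ z) K, (Metric.continuous_infDist_pt K).comp hφ, ?_⟩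
    ext z
    exact hK.mem_iff_infDist_zero hne

/-- If zero sets of the subspace `A` extend to `Z`, so do the sets of every functional class. -/
lemma funClass_extend {Z : Type*} [TopologicalSpace Z] {A : Set Z}
    (h0 : ∀ B : Set A, FunctionallyClosed B →
      ∃ C : Set Z, FunctionallyClosed C ∧ Subtype.val ⁻¹' C = B)
    {b : Bool} {α : Ordinal.{0}} {B : Set A} (hB : FunClass A b α B) :
    ∃ C : Set Z, FunClass Z b α C ∧ Subtype.val ⁻¹' C = B := by
  induction hB with
  | open_ B h =>
    obtain ⟨C, hC, hCB⟩ := h0 _ h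
    refine ⟨Cᶜ, .open_ _ (by rwa [FunctionallyOpen, compl_compl]), ?_⟩
    rw [Set.preimage_compl, hCB, compl_compl]
  | closed_ B h =>
    obtain ⟨C, hC, hCB⟩ := h0 _ h
    exact ⟨C, .closed_ _ hC, hCB⟩
  | union α B β hα hβ _ ih =>
    choose C hC hCB using ih
    exact ⟨⋃ n, C n, .union α C β hα hβ hC, by rw [Set.preimage_iUnion]; simp only [hCB]⟩
  | inter α B β hα hβ _ ih =>
    choose C hC hCB using ih
    exact ⟨⋂ n, C n, .inter α C β hα hβ hC, by rw [Set.preimage_iInter]; simp only [hCB]⟩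

lemma trunc_mem_Fset (i : PosNat) (S : Set ↥(Set.Ioc (0 : ℝ) 1)) (y : Yprod) (hy : y ∈ Fset i) :
    trunc i S y ∈ Fset i := by
  have h : ∀ n, n ≠ i → ∀ t, trunc i S y t = n → y t = n := by
    intro n hn t ht
    by_cases hS : t ∈ S
    · rwa [trunc_of_mem hS] at ht
    · rw [trunc_of_notMem hS] at ht
      exact absurd ht.symm hn
  intro n hn t ht t' ht'
  exact hy n hn (h n hn t ht) (h n hn t' ht')

/-- Zero sets of `A × F i` are traces of zero sets of `X`. -/
lemma functionallyClosed_extend (A : Set ↥(Set.Icc (0 : ℝ) 1)) (i : PosNat)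
    (B : Set {p : Xprod | p.1 ∈ A ∧ p.2 ∈ Fset i}) (hB : FunctionallyClosed B) :
    ∃ C : Set Xprod, FunctionallyClosed C ∧ Subtype.val ⁻¹' C = B := by
  classical
  obtain ⟨f, hf, rfl⟩ := hB
  have hF := trunc_mem_Fset i
  have hdep : ∀ a : A, ∃ S : Set ↥(Set.Ioc (0 : ℝ) 1), S.Countable ∧ ∀ S', S ⊆ S' →
      ∀ y : Fset i, f ⟨(a.1, y.1), a.2, y.2⟩ = f ⟨(a.1, trunc i S' y.1), a.2, hF S' _ y.2⟩ :=
    fun a => exists_countable_trunc i hF (fun y : Fset i => f ⟨(a.1, y.1), a.2, y.2⟩)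
      (hf.comp (by fun_prop))
  choose S hSc hS using hdep
  obtain ⟨D, hDc, hDd⟩ := TopologicalSpace.exists_countable_dense A
  let S₀ := ⋃ a ∈ D, S a
  have hS₀c : S₀.Countable := hDc.biUnion fun a _ => hSc a
  have hS₀ : ∀ (a : A) (y : Fset i),
      f ⟨(a.1, y.1), a.2, y.2⟩ = f ⟨(a.1, trunc i S₀ y.1), a.2, hF S₀ _ y.2⟩ := by
    intro a y
    have h : (fun a : A => f ⟨(a.1, y.1), a.2, y.2⟩) =
        fun a : A => f ⟨(a.1, trunc i S₀ y.1), a.2, hF S₀ _ y.2⟩ := by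
      refine Continuous.ext_on hDd (hf.comp (by fun_prop)) (hf.comp (by fun_prop)) ?_
      intro a ha
      exact hS a S₀ (Set.subset_biUnion_of_mem ha) y
    exact congrFun h a
  have : Countable S₀ := hS₀c.to_subtype
  let M := ↥(Set.Icc (0 : ℝ) 1) × (S₀ → PosNat)
  have : TopologicalSpace.MetrizableSpace M :=
    TopologicalSpace.metrizableSpace_of_t3_secondCountable M
  let φ : Xprod → M := fun p => (p.1, fun t => p.2 t)
  have hφ : Continuous φ := by fun_prop
  -- `e` extends by `i` outside `S₀`, so `e ∘ φ` truncates the second factor to `S₀`.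
  let e : M → Xprod := fun m => (m.1, fun t => if h : t ∈ S₀ then m.2 ⟨t, h⟩ else i)
  have he : Continuous e := by
    refine continuous_fst.prodMk (continuous_pi fun t => ?_)
    by_cases h : t ∈ S₀
    · simp only [h, dite_true]; fun_prop
    · simp only [h, dite_false]; fun_prop
  have heφ : ∀ p, e (φ p) = (p.1, trunc i S₀ p.2) := by
    intro p
    refine Prod.ext rfl (funext fun t => ?_)
    by_cases h : t ∈ S₀ <;> simp [e, φ, trunc, h]
  let P : Set Xprod := {p | p.1 ∈ A ∧ p.2 ∈ Fset i}
  let G : e ⁻¹' P → ℝ := fun m => f ⟨e m.1, m.2⟩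
  have hG : Continuous G := hf.comp (by fun_prop)
  obtain ⟨K, hK, hKG⟩ := isClosed_induced_iff.1 (isClosed_singleton.preimage hG : IsClosed (G ⁻¹' {0}))
  refine ⟨φ ⁻¹' K, functionallyClosed_preimage hφ hK, ?_⟩
  ext p
  have hp : e (φ p.1) ∈ P := by rw [heφ]; exact ⟨p.2.1, hF _ _ p.2.2⟩
  have h1 : (⟨φ p.1, hp⟩ : e ⁻¹' P) ∈ Subtype.val ⁻¹' K ↔ G ⟨φ p.1, hp⟩ = 0 := by
    rw [hKG]; rfl
  have h2 : G ⟨φ p.1, hp⟩ = f p := by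
    refine Eq.trans ?_ (hS₀ ⟨p.1.1, p.2.1⟩ ⟨p.1.2, p.2.2⟩).symm
    exact congrArg f (Subtype.ext (heφ p.1))
  rw [h2] at h1
  exact h1

/-- for every nonempty `A ⊆ [0,1]`, every `α < ω₁` and each `i ∈ {1,2}`,
the set `A × F i` is α-embedded in `X = [0,1] × ℕ^{(0,1]}`. -/
theorem statement15 (A : Set ↥(Set.Icc (0 : ℝ) 1)) (hA : A.Nonempty)
    (α : Ordinal.{0}) (hα : α < (Cardinal.aleph 1).ord)
    (i : PosNat) (hi : i = ⟨1, one_pos⟩ ∨ i = ⟨2, two_pos⟩) :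
    IsAlphaEmbedded α {p : Xprod | p.1 ∈ A ∧ p.2 ∈ Fset i} := by
  intro B hBA hB
  obtain ⟨C, hC, hCB⟩ := funClass_extend (functionallyClosed_extend A i) hB
  refine ⟨C, hC, ?_⟩
  rw [Subtype.preimage_val_eq_preimage_val_iff] at hCB
  rw [Set.inter_comm, hCB, Set.inter_eq_right.2 hBA]
end

section
/- Let 0 ≤ α < ω₁, let X = [0,1] × ∏_{t∈(0,1]} X_t where X_t = ℕ with the discrete topology for every t ∈ (0,1], for i ∈ {1,2} let F_i = {y = (y_t)_{t∈(0,1]} ∈ ℕ^{(0,1]} : for every n ∈ ℕ with n ≠ i, the set {t ∈ (0,1] : y_t = n} has at most one element}, let A₁ ⊆ [0,1] be a nonempty set of the functionally additive class α in [0,1] with nonempty complement, and let A₂ = [0,1]∖A₁. Then the set E = (A₁ × F₁) ∪ (A₂ × F₂) is (α+1)-embedded in X. -/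
/-!
Write `P i = A × F i` for `A ⊆ [0,1]`. The key point is that `P i` is `z`-embedded in `X`: every
zero set of `P i` is the trace of a zero set of `X` (`exists_zeroSet_extension`). By induction on
the class, every set of class `β` in `P i` is then the trace of a set of the same class in `X`
(`FunClass.exists_extension`).

For the key point, a continuous function `f` on `P i` depends only on the first coordinate and on
countably many of the coordinates `t ∈ (0,1]`. Otherwise, uncountably many `t` admit a point of
`P i` at which resetting the coordinate `t` to `i` changes `f`, and finitely many coordinates are
enough to witness this change. A Δ-system argument (`exists_root`) makes the finite witnesses
extend a common finite pattern `r` and otherwise spread out; the point which equals `r` on the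
domain of `r` and `i` elsewhere lies in `F i`, and `f` is discontinuous there. Once `f` depends
only on a countable set `D` of coordinates, it factors through a continuous function on a subspace
of the metrizable space `[0,1] × ℕ^D`, in which closed sets are zero sets.

Finally, for `B` of multiplicative class `α + 1` in `E`, extend the traces of `B` on `A₁ × F₁` and
`A₂ × F₂` to sets `C₁`, `C₂` of the same class in `X`. As both `A₁` and `A₂` are of multiplicative
class `α + 1`, the set `(C₁ ∪ (A₂ × Y)) ∩ (C₂ ∪ (A₁ × Y))` is of this class, and its trace
on `E` is `B`.
-/

open Set Topology

/-! ### Calculus of the functional classes -/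

section Classes

variable {Z W : Type*} [TopologicalSpace Z] [TopologicalSpace W]

theorem FunClass.preimage {g : W → Z} (hg : Continuous g) {b : Bool} {β : Ordinal.{0}} {A : Set Z}
    (h : FunClass Z b β A) : FunClass W b β (g ⁻¹' A) := by
  induction h with
  | open_ A h =>
    obtain ⟨f, hf, e⟩ := h
    refine .open_ _ ⟨f ∘ g, hf.comp hg, ?_⟩
    rw [← preimage_compl, e]; rfl
  | closed_ A h =>
    obtain ⟨f, hf, e⟩ := h
    refine .closed_ _ ⟨f ∘ g, hf.comp hg, ?_⟩
    rw [e]; rfl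
  | union α A β hα hβ _ ih =>
    rw [preimage_iUnion]
    exact .union α _ β hα hβ ih
  | inter α A β hα hβ _ ih =>
    rw [preimage_iInter]
    exact .inter α _ β hα hβ ih

theorem FunClass.compl {b : Bool} {β : Ordinal.{0}} {A : Set Z}
    (h : FunClass Z b β A) : FunClass Z (!b) β Aᶜ := by
  induction h with
  | open_ A h => exact .closed_ _ h
  | closed_ A h => exact .open_ _ (by rwa [FunctionallyOpen, compl_compl])
  | union α A β hα hβ _ ih =>
    rw [compl_iUnion]
    exact .inter α _ β hα hβ ih
  | inter α A β hα hβ _ ih =>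
    rw [compl_iInter]
    exact .union α _ β hα hβ ih

theorem FunClass.mul_of_add {β γ : Ordinal.{0}} {A : Set Z} (h : FunClass Z true β A)
    (hlt : β < γ) : FunClass Z false γ A := by
  have := FunClass.inter γ (fun _ : ℕ => A) (fun _ => β) (bot_lt_of_lt hlt).ne'
    (fun _ => hlt) (fun _ => h)
  rwa [iInter_const] at this

theorem functionallyOpen_abs_lt {f : Z → ℝ} (hf : Continuous f) (c : ℝ) :
    FunctionallyOpen {x | |f x| < c} := by
  refine ⟨fun x => max (c - |f x|) 0, by fun_prop, ?_⟩
  ext x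
  simp

theorem FunClass.mul_mono {β γ : Ordinal.{0}} {A : Set Z} (h : FunClass Z false β A)
    (hle : β ≤ γ) : FunClass Z false γ A := by
  rcases hle.eq_or_lt with rfl | hlt
  · exact h
  have hγ : γ ≠ 0 := (bot_lt_of_lt hlt).ne'
  cases h with
  | closed_ A h =>
    obtain ⟨f, hf, rfl⟩ := h
    have key := FunClass.inter γ (fun n : ℕ => {x | |f x| < 1 / ((n : ℝ) + 1)}) (fun _ => 0) hγ
      (fun _ => hlt) (fun n => .open_ _ (functionallyOpen_abs_lt hf _))
    convert key using 1
    ext x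
    simp only [mem_preimage, mem_singleton_iff, mem_iInter, mem_ofPred_eq]
    constructor
    · intro h n
      rw [h, abs_zero]
      positivity
    · intro h
      by_contra hne
      obtain ⟨n, hn⟩ := exists_nat_one_div_lt (abs_pos.2 hne)
      exact lt_asymm hn (h n)
  | inter _ A δ hα hδ h => exact .inter γ A δ hγ (fun n => (hδ n).trans hlt) h

theorem FunClass.add_mono {β γ : Ordinal.{0}} {A : Set Z} (h : FunClass Z true β A)
    (hle : β ≤ γ) : FunClass Z true γ A := by
  have := (FunClass.mul_mono (by simpa using h.compl) hle).compl
  rwa [compl_compl] at this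

theorem FunClass.mul_inter {γ : Ordinal.{0}} {A B : Set Z} (hA : FunClass Z false γ A)
    (hB : FunClass Z false γ B) : FunClass Z false γ (A ∩ B) := by
  cases hA with
  | closed_ A h =>
    obtain ⟨f, hf, rfl⟩ := h
    cases hB with
    | closed_ B h =>
      obtain ⟨g, hg, rfl⟩ := h
      refine .closed_ _ ⟨fun x => |f x| + |g x|, by fun_prop, ?_⟩
      ext x
      have := add_eq_zero_iff_of_nonneg (abs_nonneg (f x)) (abs_nonneg (g x))
      simp [this]
    | inter _ _ _ h0 => exact absurd rfl h0
  | inter _ A δ hγ hδ h =>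
    cases hB with
    | closed_ => exact absurd rfl hγ
    | inter _ B ε _ hε h' =>
      have key := FunClass.inter γ
        (fun n => Sum.elim A B (Equiv.natSumNatEquivNat.symm n))
        (fun n => Sum.elim δ ε (Equiv.natSumNatEquivNat.symm n)) hγ
        (fun n => by rcases Equiv.natSumNatEquivNat.symm n with m | m <;> simp [hδ, hε])
        (fun n => by rcases Equiv.natSumNatEquivNat.symm n with m | m <;> simp [h, h'])
      convert key using 1
      rw [Equiv.natSumNatEquivNat.symm.surjective.iInter_comp (g := Sum.elim A B), iInter_sum]
      rfl

theorem FunClass.add_union {γ : Ordinal.{0}} {A B : Set Z} (hA : FunClass Z true γ A)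
    (hB : FunClass Z true γ B) : FunClass Z true γ (A ∪ B) := by
  have := (FunClass.mul_inter (by simpa using hA.compl) (by simpa using hB.compl)).compl
  simpa [compl_inter] using this

theorem FunClass.mul_union {γ : Ordinal.{0}} {A B : Set Z} (hA : FunClass Z false γ A)
    (hB : FunClass Z false γ B) : FunClass Z false γ (A ∪ B) := by
  cases hA with
  | closed_ A h =>
    obtain ⟨f, hf, rfl⟩ := h
    cases hB with
    | closed_ B h =>
      obtain ⟨g, hg, rfl⟩ := h
      refine .closed_ _ ⟨fun x => f x * g x, by fun_prop, ?_⟩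
      ext x
      simp
    | inter _ _ _ h0 => exact absurd rfl h0
  | inter _ A δ hγ hδ h =>
    cases hB with
    | closed_ => exact absurd rfl hγ
    | inter _ B ε _ hε h' =>
      have key := FunClass.inter γ
        (fun n => A (Nat.pairEquiv.symm n).1 ∪ B (Nat.pairEquiv.symm n).2)
        (fun n => max (δ (Nat.pairEquiv.symm n).1) (ε (Nat.pairEquiv.symm n).2)) hγ
        (fun n => max_lt (hδ _) (hε _))
        (fun n => ((h _).add_mono (le_max_left _ _)).add_union ((h' _).add_mono (le_max_right _ _)))
      convert key using 1
      rw [Nat.pairEquiv.symm.surjective.iInter_comp (g := fun p : ℕ × ℕ => A p.1 ∪ B p.2),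
        iInter_union]
      simp_rw [union_iInter]
      ext x
      simp only [mem_iInter, Prod.forall]

/-- If zero sets of the subspace `P` extend to zero sets of `Z`, then sets of every functional
class in `P` extend to sets of the same class in `Z`. -/
theorem FunClass.exists_extension {P : Set Z}
    (hP : ∀ B : Set P, FunctionallyClosed B →
      ∃ C : Set Z, FunctionallyClosed C ∧ Subtype.val ⁻¹' C = B)
    {b : Bool} {β : Ordinal.{0}} {B : Set P} (h : FunClass P b β B) :
    ∃ C : Set Z, FunClass Z b β C ∧ Subtype.val ⁻¹' C = B := by
  induction h with
  | open_ B h =>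
    obtain ⟨C, hC, e⟩ := hP _ h
    exact ⟨Cᶜ, .open_ _ (by rwa [FunctionallyOpen, compl_compl]), by
      rw [preimage_compl, e, compl_compl]⟩
  | closed_ B h =>
    obtain ⟨C, hC, e⟩ := hP _ h
    exact ⟨C, .closed_ _ hC, e⟩
  | union α A β hα hβ _ ih =>
    choose C hC e using ih
    exact ⟨⋃ n, C n, .union α C β hα hβ hC, by simp_rw [preimage_iUnion, e]⟩
  | inter α A β hα hβ _ ih =>
    choose C hC e using ih
    exact ⟨⋂ n, C n, .inter α C β hα hβ hC, by simp_rw [preimage_iInter, e]⟩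

end Classes

/-! ### A Δ-system lemma -/

/-- From an uncountable family of finite sets one can extract an uncountable subfamily whose
members contain a common finite set `r`, and such that every countable set meets only countably
many of the sets `G t \ r`. -/
theorem exists_root {ι κ : Type*} (G : ι → Finset κ) {D : Set ι} (hD : ¬ D.Countable) :
    ∃ (r : Finset κ) (D' : Set ι), D' ⊆ D ∧ ¬ D'.Countable ∧ (∀ t ∈ D', r ⊆ G t) ∧
      ∀ N : Set κ, N.Countable → {t ∈ D' | ∃ x ∈ N, x ∈ G t ∧ x ∉ r}.Countable := by
  classical
  obtain ⟨n, hn⟩ : ∃ n, ¬ {t ∈ D | (G t).card = n}.Countable := by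
    by_contra! h
    refine hD ((countable_iUnion h).mono fun t ht => ?_)
    exact mem_iUnion.2 ⟨(G t).card, ht, rfl⟩
  -- A finite set of maximal size contained in uncountably many of the sets `G t` of size `n`.
  let Q : ℕ → Prop := fun m => ∃ r : Finset κ, r.card = m ∧
    ¬ {t ∈ D | (G t).card = n ∧ r ⊆ G t}.Countable
  have hQ0 : Q 0 := ⟨∅, rfl, by simpa using hn⟩
  have hQle : ∀ m, Q m → m ≤ n := by
    rintro m ⟨r, rfl, hr⟩
    obtain ⟨t, ht⟩ : {t ∈ D | (G t).card = n ∧ r ⊆ G t}.Nonempty := by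
      by_contra h
      rw [not_nonempty_iff_eq_empty] at h
      exact hr (h ▸ countable_empty)
    exact ht.2.1 ▸ Finset.card_le_card ht.2.2
  obtain ⟨r, hrm, hr⟩ : Q (Nat.findGreatest Q n) := Nat.findGreatest_spec (Nat.zero_le n) hQ0
  refine ⟨r, _, fun t ht => ht.1, hr, fun t ht => ht.2.2, fun N hN => ?_⟩
  have hx : ∀ x ∉ r, {t ∈ D | (G t).card = n ∧ insert x r ⊆ G t}.Countable := by
    intro x hx
    by_contra h
    have hq : Q (r.card + 1) := ⟨insert x r, Finset.card_insert_of_notMem hx, h⟩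
    have := Nat.le_findGreatest (hQle _ hq) hq
    omega
  refine ((hN.mono (sdiff_subset (t := (r : Set κ)))).biUnion fun x hxN => hx x hxN.2).mono ?_
  rintro t ⟨⟨h1, h2, h3⟩, x, hxN, hxG, hxr⟩
  exact mem_biUnion (show x ∈ N \ (r : Set κ) from ⟨hxN, hxr⟩)
    ⟨h1, h2, Finset.insert_subset hxG h3⟩

/-! ### Continuous functions on `A × F i` depend on countably many coordinates -/

/-- The factor `A × F i` of the set `E`. -/
def Pset (A : Set ↥(Set.Icc (0 : ℝ) 1)) (i : PosNat) : Set Xprod :=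
  {p | p.1 ∈ A ∧ p.2 ∈ Fset i}

theorem Fset.of_eq_or {i : PosNat} {y z : Yprod} (hy : y ∈ Fset i)
    (h : ∀ t, z t = y t ∨ z t = i) : z ∈ Fset i := by
  intro n hn s hs t ht
  simp only [mem_ofPred_eq] at hs ht
  refine hy n hn ?_ ?_
  · rcases h s with e | e
    · exact e.symm.trans hs
    · exact absurd (hs.symm.trans e) hn
  · rcases h t with e | e
    · exact e.symm.trans ht
    · exact absurd (ht.symm.trans e) hn

theorem exists_basic_nhd {U : Set Xprod} {a : ↥(Set.Icc (0 : ℝ) 1)} {y : Yprod}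
    (hU : U ∈ 𝓝 (a, y)) :
    ∃ V ∈ TopologicalSpace.countableBasis ↥(Set.Icc (0 : ℝ) 1), a ∈ V ∧
      ∃ S : Finset ↥(Set.Ioc (0 : ℝ) 1), ∀ b ∈ V, ∀ z : Yprod, (∀ t ∈ S, z t = y t) →
        (b, z) ∈ U := by
  rw [nhds_prod_eq, Filter.mem_prod_iff] at hU
  obtain ⟨V₁, hV₁, O, hO, hsub⟩ := hU
  obtain ⟨V, hV, haV, hVV⟩ :=
    (TopologicalSpace.isBasis_countableBasis ↥(Set.Icc (0 : ℝ) 1)).mem_nhds_iff.1 hV₁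
  rw [nhds_pi, Filter.mem_pi'] at hO
  obtain ⟨S, u, hu, hSO⟩ := hO
  refine ⟨V, hV, haV, S, fun b hb z hz => hsub ⟨hVV hb, hSO fun t ht => ?_⟩⟩
  change z t ∈ u t
  rw [hz t ht]
  exact mem_of_mem_nhds (hu t)

/-- The coordinates `t` such that resetting the coordinate `t` to `i` at some point of `A × F i`
changes the value of `f`. -/
def depSet (A : Set ↥(Set.Icc (0 : ℝ) 1)) (i : PosNat) (f : Xprod → ℝ) :
    Set ↥(Set.Ioc (0 : ℝ) 1) :=
  {t | ∃ a ∈ A, ∃ y ∈ Fset i, f (a, y) ≠ f (a, Function.update y t i)}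

/-- A change of `f` at the coordinate `t` is bounded away from zero on a basic neighbourhood. -/
theorem depSet_witness {A : Set ↥(Set.Icc (0 : ℝ) 1)} {i : PosNat} {f : Xprod → ℝ}
    (hf : ContinuousOn f (Pset A i)) {t : ↥(Set.Ioc (0 : ℝ) 1)} (ht : t ∈ depSet A i f) :
    ∃ (k : ℕ) (V : TopologicalSpace.countableBasis ↥(Set.Icc (0 : ℝ) 1))
      (S : Finset ↥(Set.Ioc (0 : ℝ) 1)) (y : Yprod), y ∈ Fset i ∧ (V.1 ∩ A).Nonempty ∧
      ∀ b ∈ V.1 ∩ A, ∀ z ∈ Fset i, ∀ z' ∈ Fset i, (∀ s ∈ S, z s = y s) →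
        (∀ s ∈ S, z' s = Function.update y t i s) → 1 / ((k : ℝ) + 1) < |f (b, z) - f (b, z')| := by
  classical
  obtain ⟨a, ha, y, hy, hne⟩ := ht
  have hy' : Function.update y t i ∈ Fset i := Fset.of_eq_or hy fun s => by
    by_cases h : s = t
    · subst h; simp
    · simp [h]
  obtain ⟨k, hk⟩ := exists_nat_one_div_lt
    (show 0 < |f (a, y) - f (a, Function.update y t i)| / 3 from
      div_pos (abs_pos.2 (sub_ne_zero.2 hne)) three_pos)
  have hpos : 0 < 1 / ((k : ℝ) + 1) := by positivity
  have nb : ∀ w ∈ Fset i, ∃ V ∈ TopologicalSpace.countableBasis ↥(Set.Icc (0 : ℝ) 1), a ∈ V ∧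
      ∃ S : Finset ↥(Set.Ioc (0 : ℝ) 1), ∀ b ∈ V, ∀ z : Yprod, (∀ t ∈ S, z t = w t) →
        ((b, z) ∈ Pset A i → |f (b, z) - f (a, w)| < 1 / ((k : ℝ) + 1)) := by
    intro w hw
    have h1 := hf (a, w) ⟨ha, hw⟩ (Metric.ball_mem_nhds _ hpos)
    rw [Filter.mem_map, mem_nhdsWithin_iff_eventually] at h1
    exact exists_basic_nhd h1
  obtain ⟨V₁, hV₁, ha₁, S₁, h₁⟩ := nb y hy
  obtain ⟨V₂, hV₂, ha₂, S₂, h₂⟩ := nb _ hy'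
  obtain ⟨V, hV, haV, hVV⟩ :=
    (TopologicalSpace.isBasis_countableBasis ↥(Set.Icc (0 : ℝ) 1)).exists_subset_of_mem_open
      (show a ∈ V₁ ∩ V₂ from ⟨ha₁, ha₂⟩)
      ((TopologicalSpace.isOpen_of_mem_countableBasis hV₁).inter
        (TopologicalSpace.isOpen_of_mem_countableBasis hV₂))
  refine ⟨k, ⟨V, hV⟩, S₁ ∪ S₂, y, hy, ⟨a, haV, ha⟩, ?_⟩
  rintro b ⟨hbV, hbA⟩ z hz z' hz' hzy hzy'
  have e₁ := h₁ b (hVV hbV).1 z (fun s hs => hzy s (Finset.mem_union_left _ hs)) ⟨hbA, hz⟩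
  have e₂ := h₂ b (hVV hbV).2 z' (fun s hs => hzy' s (Finset.mem_union_right _ hs)) ⟨hbA, hz'⟩
  have e₃ : |f (a, y) - f (a, Function.update y t i)| ≤
      |f (b, z) - f (a, y)| + |f (b, z) - f (b, z')| +
        |f (b, z') - f (a, Function.update y t i)| := by
    have := abs_sub_le (f (a, y)) (f (b, z)) (f (b, z'))
    have := abs_sub_le (f (a, y)) (f (b, z')) (f (a, Function.update y t i))
    rw [abs_sub_comm (f (b, z)) (f (a, y))]
    linarith
  linarith

theorem depSet_countable {A : Set ↥(Set.Icc (0 : ℝ) 1)} {i : PosNat} {f : Xprod → ℝ}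
    (hf : ContinuousOn f (Pset A i)) : (depSet A i f).Countable := by
  classical
  by_contra hD
  have wit := fun t : depSet A i f => depSet_witness hf t.2
  choose k V S y hy hne hw using wit
  -- Make the lower bound `1 / (k + 1)` and the basic open set `V` independent of `t`.
  obtain ⟨⟨k₀, V₀⟩, hq⟩ : ∃ q : ℕ × TopologicalSpace.countableBasis ↥(Set.Icc (0 : ℝ) 1),
      ¬ {t | (k t, V t) = q}.Countable := by
    by_contra! h
    have : Countable (TopologicalSpace.countableBasis ↥(Set.Icc (0 : ℝ) 1)) :=
      (TopologicalSpace.countable_countableBasis _).to_subtype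
    have hu : (univ : Set (depSet A i f)).Countable :=
      (countable_iUnion h).mono fun t _ => mem_iUnion.2 ⟨(k t, V t), rfl⟩
    exact hD (countable_coe_iff.1 (countable_univ_iff.1 hu))
  obtain ⟨r, D', hD'q, hD', hrG, hN⟩ :=
    exists_root (fun t : depSet A i f => (S t).image fun s => (s, y t s)) hq
  obtain ⟨t₀, ht₀⟩ : D'.Nonempty := by
    by_contra h
    rw [not_nonempty_iff_eq_empty] at h
    exact hD' (h ▸ countable_empty)
  have hr : ∀ t ∈ D', ∀ s v, (s, v) ∈ r → s ∈ S t ∧ y t s = v := by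
    intro t ht s v hs
    have := hrG t ht hs
    simp only [Finset.mem_image, Prod.mk.injEq] at this
    obtain ⟨s', h1, rfl, h2⟩ := this
    exact ⟨h1, h2⟩
  -- The point at which continuity fails: equal to the root on its domain, and to `i` elsewhere.
  let ys : Yprod := fun s => if (s, y t₀ s) ∈ r then y t₀ s else i
  have hys : ys ∈ Fset i := Fset.of_eq_or (hy t₀) fun s => by
    by_cases h : (s, y t₀ s) ∈ r <;> simp [ys, h]
  have hysr : ∀ s v, (s, v) ∈ r → ys s = v := by
    intro s v h
    obtain ⟨-, rfl⟩ := hr t₀ ht₀ s v h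
    simp [ys, h]
  have hysn : ∀ s, (∀ v, (s, v) ∉ r) → ys s = i := by
    intro s h
    simp [ys, h]
  have hV0 : (V₀.1 ∩ A).Nonempty := by
    have := hD'q ht₀
    simp only [mem_ofPred_eq, Prod.mk.injEq] at this
    exact this.2 ▸ hne t₀
  obtain ⟨a, haV, haA⟩ := hV0
  have hpos : 0 < 1 / ((k₀ : ℝ) + 1) / 2 := by positivity
  have h1 := hf (a, ys) ⟨haA, hys⟩ (Metric.ball_mem_nhds _ hpos)
  rw [Filter.mem_map, mem_nhdsWithin_iff_eventually] at h1
  obtain ⟨W, -, haW, R, hR⟩ := exists_basic_nhd h1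
  have hbad : {t ∈ D' | ∃ x ∈ {x : ↥(Set.Ioc (0 : ℝ) 1) × PosNat | x.1 ∈ R}, x ∈
      (S t).image (fun s => (s, y t s)) ∧ x ∉ r}.Countable := by
    refine hN _ ?_
    have : {x : ↥(Set.Ioc (0 : ℝ) 1) × PosNat | x.1 ∈ R} = (R : Set _) ×ˢ univ := by
      ext; simp
    rw [this]
    exact R.countable_toSet.prod countable_univ
  have hdom : {t : depSet A i f | ∃ v, (t.1, v) ∈ r}.Countable := by
    refine ((r.image Prod.fst).countable_toSet.preimage Subtype.val_injective).mono ?_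
    rintro t ⟨v, hv⟩
    exact Finset.mem_coe.2 (Finset.mem_image.2 ⟨_, hv, rfl⟩)
  obtain ⟨t, htD, htn⟩ : ∃ t ∈ D', t ∉ {t ∈ D' | ∃ x ∈ {x : ↥(Set.Ioc (0 : ℝ) 1) × PosNat |
      x.1 ∈ R}, x ∈ (S t).image (fun s => (s, y t s)) ∧ x ∉ r} ∪
      {t : depSet A i f | ∃ v, (t.1, v) ∈ r} := by
    by_contra! h
    exact hD' ((hbad.union hdom).mono h)
  have htr : ∀ v, (t.1, v) ∉ r := fun v hv => htn (Or.inr ⟨v, hv⟩)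
  have hSR : ∀ s ∈ R, s ∈ S t → (s, y t s) ∈ r := by
    intro s hsR hsS
    by_contra h
    exact htn (Or.inl ⟨htD, _, hsR, Finset.mem_image.2 ⟨s, hsS, rfl⟩, h⟩)
  let z : Yprod := fun s => if s ∈ S t then y t s else i
  have hz : z ∈ Fset i := Fset.of_eq_or (hy t) fun s => by
    by_cases h : s ∈ S t <;> simp [z, h]
  have hz' : Function.update z t.1 i ∈ Fset i := Fset.of_eq_or hz fun s => by
    by_cases h : s = t.1
    · subst h; simp
    · simp [h]
  have hzR : ∀ s ∈ R, z s = ys s := by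
    intro s hs
    by_cases h : s ∈ S t
    · rw [hysr s _ (hSR s hs h)]
      simp [z, h]
    · rw [hysn s fun v hv => h (hr t htD s v hv).1]
      simp [z, h]
  have hzR' : ∀ s ∈ R, Function.update z t.1 i s = ys s := by
    intro s hs
    by_cases h : s = t.1
    · subst h
      rw [Function.update_self, hysn _ htr]
    · rw [Function.update_of_ne h, hzR s hs]
  have hkV := hD'q htD
  simp only [mem_ofPred_eq, Prod.mk.injEq] at hkV
  have e := hw t a ⟨by rw [hkV.2]; exact haV, haA⟩ z hz _ hz'
    (fun s hs => by simp [z, hs])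
    (fun s hs => by
      by_cases h : s = t.1
      · subst h; simp
      · simp [h, z, hs])
  rw [hkV.1] at e
  have e₁ := hR a haW z hzR ⟨haA, hz⟩
  have e₂ := hR a haW _ hzR' ⟨haA, hz'⟩
  simp only [mem_preimage, Metric.mem_ball, Real.dist_eq] at e₁ e₂
  have e₃ := abs_sub_le (f (a, z)) (f (a, ys)) (f (a, Function.update z t.1 i))
  rw [abs_sub_comm (f (a, ys))] at e₃
  linarith

open Classical in
/-- Resetting to `i` all coordinates outside `depSet A i f` does not change `f`. -/
theorem eq_of_depSet {A : Set ↥(Set.Icc (0 : ℝ) 1)} {i : PosNat} {f : Xprod → ℝ}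
    (hf : ContinuousOn f (Pset A i)) {a : ↥(Set.Icc (0 : ℝ) 1)} (ha : a ∈ A) {y : Yprod}
    (hy : y ∈ Fset i) :
    f (a, fun t => if t ∈ depSet A i f then y t else i) = f (a, y) := by
  set D := depSet A i f with hDdef
  let w : Finset ↥(Set.Ioc (0 : ℝ) 1) → Yprod := fun R t => if t ∈ R ∧ t ∉ D then i else y t
  have hwF : ∀ R, w R ∈ Fset i := fun R => Fset.of_eq_or hy fun t => by
    by_cases h : t ∈ R ∧ t ∉ D
    · right; simp only [w, if_pos h]
    · left; simp only [w, if_neg h]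
  have hyF : (fun t => if t ∈ D then y t else i) ∈ Fset i := Fset.of_eq_or hy fun t => by
    by_cases h : t ∈ D <;> simp [h]
  have hconst : ∀ R, f (a, w R) = f (a, y) := by
    intro R
    induction R using Finset.induction_on with
    | empty => simp [w]
    | insert t R _ ih =>
      rw [← ih]
      by_cases htD : t ∈ D
      · congr 2
        funext s
        by_cases hs : s = t
        · subst hs; simp [w, htD]
        · simp [w, hs]
      · have hup : w (insert t R) = Function.update (w R) t i := by
          funext s
          by_cases hs : s = t
          · subst hs; simp [w, htD]
          · simp [w, hs]
        rw [hup]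
        by_contra hne
        exact htD ⟨a, ha, w R, hwF R, fun h => hne h.symm⟩
  have hlim : Filter.Tendsto (fun R => ((a, w R) : Xprod)) Filter.atTop
      (𝓝[Pset A i] (a, fun t => if t ∈ D then y t else i)) := by
    refine tendsto_nhdsWithin_iff.2 ⟨?_, Filter.Eventually.of_forall fun R => ⟨ha, hwF R⟩⟩
    refine tendsto_const_nhds.prodMk_nhds (tendsto_pi_nhds.2 fun t => ?_)
    refine tendsto_const_nhds.congr' ?_
    filter_upwards [Filter.eventually_ge_atTop {t}] with R hR
    have htR : t ∈ R := hR (Finset.mem_singleton_self t)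
    by_cases h : t ∈ D <;> simp [w, h, htR]
  have h1 := (hf _ (show _ ∈ Pset A i from ⟨ha, hyF⟩)).tendsto.comp hlim
  refine tendsto_nhds_unique h1 (tendsto_const_nhds.congr fun R => ?_)
  exact (hconst R).symm

/-! ### `A × F i` is `z`-embedded -/

theorem functionallyClosed_of_isClosed {Z : Type*} [TopologicalSpace Z]
    [TopologicalSpace.PseudoMetrizableSpace Z] {K : Set Z} (hK : IsClosed K) :
    FunctionallyClosed K := by
  let _ := TopologicalSpace.pseudoMetrizableSpacePseudoMetric Z
  rcases K.eq_empty_or_nonempty with rfl | hne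
  · exact ⟨fun _ => 1, continuous_const, by ext; simp⟩
  · refine ⟨fun x => Metric.infDist x K, Metric.continuous_infDist_pt K, ?_⟩
    ext x
    exact hK.mem_iff_infDist_zero hne

theorem exists_zeroSet_extension (A : Set ↥(Set.Icc (0 : ℝ) 1)) (i : PosNat)
    (B : Set (Pset A i)) (hB : FunctionallyClosed B) :
    ∃ C : Set Xprod, FunctionallyClosed C ∧ Subtype.val ⁻¹' C = B := by
  classical
  obtain ⟨g, hg, rfl⟩ := hB
  let f : Xprod → ℝ := fun x => if h : x ∈ Pset A i then g ⟨x, h⟩ else 0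
  have hfg : ∀ x : Pset A i, f x = g x := fun x => by simp [f, x.2]
  have hf : ContinuousOn f (Pset A i) := by
    rw [continuousOn_iff_continuous_domRestrict]
    exact hg.congr fun x => (hfg x).symm
  have hDc : Countable (depSet A i f) := (depSet_countable hf).to_subtype
  let D := depSet A i f
  let π : Xprod → ↥(Set.Icc (0 : ℝ) 1) × (D → PosNat) := fun p => (p.1, fun t => p.2 t.1)
  have hπ : Continuous π := by fun_prop
  let σ : ↥(Set.Icc (0 : ℝ) 1) × (D → PosNat) → Xprod :=
    fun q => (q.1, fun t => if h : t ∈ D then q.2 ⟨t, h⟩ else i)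
  have hσ : Continuous σ := by
    refine continuous_fst.prodMk (continuous_pi fun t => ?_)
    by_cases h : t ∈ D
    · simp only [h, dite_true]; fun_prop
    · simp only [h, dite_false]; fun_prop
  have hσπ : ∀ p : Xprod, σ (π p) = (p.1, fun t => if t ∈ D then p.2 t else i) := by
    intro p
    ext1
    · rfl
    · funext t
      by_cases h : t ∈ D <;> simp [σ, π, h]
  have hσP : ∀ p ∈ Pset A i, σ (π p) ∈ Pset A i := by
    intro p hp
    rw [hσπ]
    exact ⟨hp.1, Fset.of_eq_or hp.2 fun t => by by_cases h : t ∈ D <;> simp [h]⟩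
  have hfσ : ∀ p ∈ Pset A i, f (σ (π p)) = f p := by
    intro p hp
    rw [hσπ]
    exact eq_of_depSet hf hp.1 hp.2
  -- `f ∘ σ` is continuous on `π '' P`, so its zero set there is the trace of its closure.
  have hfσc : ContinuousOn (f ∘ σ) (π '' Pset A i) :=
    hf.comp hσ.continuousOn (by rintro _ ⟨p, hp, rfl⟩; exact hσP p hp)
  obtain ⟨h, hh, hK⟩ := functionallyClosed_of_isClosed
    (isClosed_closure (s := π '' (Pset A i ∩ f ⁻¹' {0})))
  refine ⟨π ⁻¹' closure (π '' (Pset A i ∩ f ⁻¹' {0})), ⟨h ∘ π, hh.comp hπ, ?_⟩, ?_⟩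
  · rw [hK]; rfl
  ext ⟨p, hp⟩
  simp only [mem_preimage, mem_singleton_iff]
  rw [← hfg ⟨p, hp⟩]
  constructor
  · intro hcl
    have h1 : (f ∘ σ) (π p) ∈ closure ((f ∘ σ) '' (π '' (Pset A i ∩ f ⁻¹' {0}))) :=
      ((hfσc _ ⟨p, hp, rfl⟩).mono (image_mono inter_subset_left)).mem_closure_image hcl
    have h2 : (f ∘ σ) '' (π '' (Pset A i ∩ f ⁻¹' {0})) ⊆ {0} := by
      rintro _ ⟨_, ⟨q, ⟨hq, hq0⟩, rfl⟩, rfl⟩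
      exact (hfσ q hq).trans hq0
    have h3 := closure_minimal h2 isClosed_singleton h1
    exact (hfσ p hp).symm.trans h3
  · intro h0
    exact subset_closure ⟨p, ⟨hp, h0⟩, rfl⟩

/-- if `A₁ ⊆ [0,1]` is a nonempty set of the functionally additive class
`α` in `[0,1]` with nonempty complement and `A₂ = [0,1] ∖ A₁`, then
`E = (A₁ × F₁) ∪ (A₂ × F₂)` is (α+1)-embedded in `X = [0,1] × ℕ^{(0,1]}`. -/
theorem statement17 (α : Ordinal.{0}) (hα : α < (Cardinal.aleph 1).ord)
    (A₁ : Set ↥(Set.Icc (0 : ℝ) 1)) (hne : A₁.Nonempty) (hne' : A₁ᶜ.Nonempty)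
    (hadd : FunClass ↥(Set.Icc (0 : ℝ) 1) true α A₁) :
    IsAlphaEmbedded (α + 1)
      ({p : Xprod | p.1 ∈ A₁ ∧ p.2 ∈ Fset ⟨1, one_pos⟩} ∪
        {p : Xprod | p.1 ∈ A₁ᶜ ∧ p.2 ∈ Fset ⟨2, two_pos⟩}) := by
  intro B hBE hB
  have hlt : α < α + 1 := Order.lt_add_one_iff.2 le_rfl
  have ext : ∀ (A : Set ↥(Set.Icc (0 : ℝ) 1)) (i : PosNat)
      (_ : Pset A i ⊆ {p : Xprod | p.1 ∈ A₁ ∧ p.2 ∈ Fset ⟨1, one_pos⟩} ∪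
        {p : Xprod | p.1 ∈ A₁ᶜ ∧ p.2 ∈ Fset ⟨2, two_pos⟩}),
      ∃ C : Set Xprod, FunClass Xprod false (α + 1) C ∧ ∀ p ∈ Pset A i, p ∈ C ↔ p ∈ B := by
    intro A i hsub
    obtain ⟨C, hC, e⟩ := FunClass.exists_extension (exists_zeroSet_extension A i)
      (hB.preimage (continuous_inclusion hsub))
    exact ⟨C, hC, fun p hp => Set.ext_iff.1 e ⟨p, hp⟩⟩
  obtain ⟨C₁, hC₁, e₁⟩ := ext A₁ ⟨1, one_pos⟩ subset_union_left
  obtain ⟨C₂, hC₂, e₂⟩ := ext A₁ᶜ ⟨2, two_pos⟩ subset_union_right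
  have hA₁ : FunClass Xprod false (α + 1) (Prod.fst ⁻¹' A₁) :=
    (hadd.mul_of_add hlt).preimage continuous_fst
  have hA₂ : FunClass Xprod false (α + 1) (Prod.fst ⁻¹' A₁ᶜ) :=
    (FunClass.mul_mono (by simpa using hadd.compl) hlt.le).preimage continuous_fst
  refine ⟨(C₁ ∪ Prod.fst ⁻¹' A₁ᶜ) ∩ (C₂ ∪ Prod.fst ⁻¹' A₁),
    (hC₁.mul_union hA₂).mul_inter (hC₂.mul_union hA₁), ?_⟩
  ext p
  constructor
  · rintro ⟨⟨h₁, h₂⟩, hp | hp⟩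
    · exact (e₁ p hp).1 (h₁.resolve_right fun h => h hp.1)
    · exact (e₂ p hp).1 (h₂.resolve_right hp.1)
  · intro hpB
    refine ⟨?_, hBE hpB⟩
    rcases hBE hpB with hp | hp
    · exact ⟨Or.inl ((e₁ p hp).2 hpB), Or.inr hp.1⟩
    · exact ⟨Or.inr hp.1, Or.inl ((e₂ p hp).2 hpB)⟩
end
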